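/- Let X be a real Banach space, b > 0, and T : X → X a b-modified enriched nonexpansive mapping, i.e. ‖b(x−y) + Tx − Ty‖ ≤ ‖x−y‖ for all x, y ∈ X. Then T has exactly one fixed point x* ∈ X. -/

import Mathlib

/-!
The inequality on `T` says that `b • id + T` is nonexpansive. Dividing by `b + 1` turns this map
into an average of the identity and `T`, which has the same fixed points as `T` and is a
contraction with constant `1 / (b + 1) < 1`, so Banach's fixed point theorem applies to it.
-/

open Function
open scoped NNReal

section AveragedMap

variable {R X : Type*} [AddCommGroup X]

/-- The averaged (Krasnoselskii) map `x ↦ (1 - c) • x + c • T x`, used to replace `T` by a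
contraction with the same fixed points. The weight `c` is any scalar, not only one in `[0, 1]`. -/
def averagedMap [Ring R] [Module R X] (c : R) (T : X → X) (x : X) : X :=
  AffineMap.lineMap x (T x) c

theorem isFixedPt_averagedMap_iff [Ring R] [IsDomain R] [Module R X] [Module.IsTorsionFree R X]
    {c : R} (hc : c ≠ 0) {T : X → X} {x : X} :
    IsFixedPt (averagedMap c T) x ↔ IsFixedPt T x := by
  rw [IsFixedPt, averagedMap, AffineMap.lineMap_eq_left_iff, or_iff_left hc, eq_comm, IsFixedPt]

theorem averagedMap_inv_add_one [DivisionRing R] [Module R X] {b : R} (hb : b + 1 ≠ 0)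
    (T : X → X) : averagedMap (b + 1)⁻¹ T = fun x => (b + 1)⁻¹ • (b • x + T x) := by
  ext x
  rw [averagedMap, AffineMap.lineMap_apply_module', eq_inv_smul_iff₀ hb, smul_add,
    smul_inv_smul₀ hb, add_smul, one_smul]
  abel

end AveragedMap

theorem lipschitzWith_smul_add_iff {R X : Type*} [SeminormedAddCommGroup X] [DistribSMul R X]
    {b : R} {K : ℝ≥0} {T : X → X} :
    LipschitzWith K (fun x => b • x + T x) ↔
      ∀ x y : X, ‖b • (x - y) + (T x - T y)‖ ≤ K * ‖x - y‖ := by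
  simp only [lipschitzWith_iff_norm_sub_le, add_sub_add_comm, smul_sub]

section NormedDivisionRing

variable {𝕜 X : Type*} [NormedDivisionRing 𝕜] [NormedAddCommGroup X] [Module 𝕜 X]
  [IsBoundedSMul 𝕜 X] {b : 𝕜} {K : ℝ≥0} {T : X → X}

theorem contractingWith_averagedMap_inv_add_one (hK : K < ‖b + 1‖₊)
    (hT : LipschitzWith K fun x => b • x + T x) :
    ContractingWith (‖b + 1‖₊⁻¹ * K) (averagedMap (b + 1)⁻¹ T) := by
  have hpos : 0 < ‖b + 1‖₊ := pos_of_gt hK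
  refine ⟨(inv_mul_lt_one₀ hpos).2 hK, ?_⟩
  rw [averagedMap_inv_add_one (nnnorm_pos.1 hpos), ← nnnorm_inv]
  exact (lipschitzWith_smul (b + 1)⁻¹).comp hT

theorem modified_enriched_nonexpansive_existsUnique_fixedPoint_general [CompleteSpace X]
    (hK : K < ‖b + 1‖₊) (hT : ∀ x y : X, ‖b • (x - y) + (T x - T y)‖ ≤ K * ‖x - y‖) :
    ∃! xstar : X, T xstar = xstar := by
  have hfix (x : X) : IsFixedPt (averagedMap (b + 1)⁻¹ T) x ↔ T x = x :=
    isFixedPt_averagedMap_iff (inv_ne_zero (nnnorm_pos.1 (pos_of_gt hK)))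
  have hcontr := contractingWith_averagedMap_inv_add_one hK (lipschitzWith_smul_add_iff.2 hT)
  exact ⟨_, (hfix _).1 hcontr.fixedPoint_isFixedPt,
    fun x hx => hcontr.fixedPoint_unique ((hfix x).2 hx)⟩

end NormedDivisionRing

/-- A `b`-modified enriched nonexpansive mapping with `b > 0` on a real Banach
space has exactly one fixed point. -/
theorem modified_enriched_nonexpansive_existsUnique_fixedPoint
    {X : Type*} [NormedAddCommGroup X] [NormedSpace ℝ X] [CompleteSpace X]
    (b : ℝ) (hb : 0 < b) (T : X → X)
    (hT : ∀ x y : X, ‖b • (x - y) + (T x - T y)‖ ≤ ‖x - y‖) :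
    ∃! xstar : X, T xstar = xstar := by
  have hnorm : 1 < ‖b + 1‖ := (lt_add_of_pos_left 1 hb).trans_le (Real.le_norm_self _)
  exact modified_enriched_nonexpansive_existsUnique_fixedPoint_general (K := 1) hnorm
    (by simpa only [NNReal.coe_one, one_mul] using hT)
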